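/- arXiv:1403.3789 — 2 statements merged into one kernel-verified Lean document; each statement's English description precedes it below -/
import Mathlib

section
/- Let a > 0 and define g(θ) := 3 cos θ sin²θ − 2a sin θ cos²θ and R₀(θ) := a cos θ − 2 sin θ − 2a cos θ sin²θ + 3 sin³θ. Then for every θ* ∈ [0,2π) with g(θ*) = 0, one has g'(θ*) · R₀(θ*) < 0. (Since the Jacobian of the desingularized blown-up vector field (θ,r) ↦ (g(θ), r·R₀(θ)) at a steady state (θ*,0) is lower/upper triangular with diagonal entries g'(θ*) and R₀(θ*), this says each of the six steady states on the circle {r=0} is a hyperbolic saddle.) -/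
/-!
The function factors as `g = sin θ · cos θ · (3 sin θ - 2a cos θ)`, so at a zero one of the three
factors vanishes. Writing `s = sin θ`, `c = cos θ`, with `s² + c² = 1`:

* if `s = 0`, then `g' = -2a c³` and `R₀ = a c`, with product `-2a²`;
* if `c = 0`, then `g' = -3 s³` and `R₀ = s`, with product `-3`;
* if `3s = 2a c`, then `g' = 3 s` and `R₀ = -s/2`, with product `-(3/2) s²`, and `s ≠ 0`
  because `s = 0` would force `c = 0` as well.
-/

open Real

/-- For `a > 0`, `g(θ) = 3 cos θ sin²θ − 2a sin θ cos²θ` and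
`R₀(θ) = a cos θ − 2 sin θ − 2a cos θ sin²θ + 3 sin³θ`, every zero `θ* ∈ [0,2π)`
of `g` satisfies `g'(θ*) · R₀(θ*) < 0`; i.e. each of the six steady states of the
desingularized blown-up vector field on the circle `{r = 0}` is a hyperbolic saddle. -/
theorem steady_states_are_hyperbolic_saddles (a : ℝ) (ha : 0 < a)
    (g R₀ : ℝ → ℝ)
    (hg : ∀ θ : ℝ, g θ = 3 * cos θ * sin θ ^ 2 - 2 * a * sin θ * cos θ ^ 2)
    (hR₀ : ∀ θ : ℝ, R₀ θ = a * cos θ - 2 * sin θ - 2 * a * cos θ * sin θ ^ 2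
        + 3 * sin θ ^ 3) :
    ∀ θstar ∈ Set.Ico (0 : ℝ) (2 * π), g θstar = 0 →
      deriv g θstar * R₀ θstar < 0 := by
  intro θ _ hθ
  have hderiv : deriv g θ = 3 * (2 * sin θ * cos θ ^ 2 - sin θ ^ 3)
      - 2 * a * (cos θ ^ 3 - 2 * sin θ ^ 2 * cos θ) := by
    rw [funext hg]
    have hs := hasDerivAt_sin θ
    have hc := hasDerivAt_cos θ
    have h := ((hc.const_mul 3).mul (hs.pow 2)).sub ((hs.const_mul (2 * a)).mul (hc.pow 2))
    refine (h.congr_deriv ?_).deriv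
    simp only [Pi.pow_apply]
    push_cast
    ring
  rw [hderiv, hR₀]
  rw [hg] at hθ
  have hsc := sin_sq_add_cos_sq θ
  generalize sin θ = s at *
  generalize cos θ = c at *
  have hfac : s * (c * (3 * s - 2 * a * c)) = 0 := by linear_combination hθ
  rcases mul_eq_zero.mp hfac with rfl | h
  · have hc : c ^ 2 = 1 := by linarith
    have hprod : -2 * a ^ 2 * (c ^ 2) ^ 2 < 0 := by
      rw [hc]
      nlinarith [pow_pos ha 2]
    linarith
  rcases mul_eq_zero.mp h with rfl | h
  · have hs : s ^ 2 = 1 := by linarith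
    have hprod : (3 * (2 * s * 0 ^ 2 - s ^ 3) - 2 * a * (0 ^ 3 - 2 * s ^ 2 * 0)) *
        (a * 0 - 2 * s - 2 * a * 0 * s ^ 2 + 3 * s ^ 3) = -3 := by
      linear_combination (-9 * s ^ 4 - 3 * s ^ 2 - 3) * hs
    linarith
  · have hs : s ≠ 0 := by
      rintro rfl
      have hc : c = 0 := by
        have h' : a * c = 0 := by linarith
        exact (mul_eq_zero.mp h').resolve_left ha.ne'
      simp [hc] at hsc
    have hg' : 3 * (2 * s * c ^ 2 - s ^ 3) - 2 * a * (c ^ 3 - 2 * s ^ 2 * c) = 3 * s := by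
      linear_combination (c ^ 2 - 2 * s ^ 2) * h + 3 * s * hsc
    have hR : a * c - 2 * s - 2 * a * c * s ^ 2 + 3 * s ^ 3 = -s / 2 := by
      linear_combination (s ^ 2 - 1 / 2) * h
    rw [hg', hR]
    have hpos : 0 < s ^ 2 := by positivity
    linarith
end

section
/- Let 0 < a < 3/2, let φ* = artanh(2a/3) > 0, and define g_h(φ) := 3 sinh²φ cosh φ − 2a cosh²φ sinh φ and R_h0(φ) := a cosh φ − 2 sinh φ − 3 sinh³φ + 2a cosh φ sinh²φ. Then g_h(φ*) = 0, g_h'(φ*) > 0, R_h0(φ*) = −(a/3) cosh φ* < 0, and hence g_h'(φ*)·R_h0(φ*) < 0. (Since the Jacobian of the desingularized hyperbolic blow-up (φ,ρ) ↦ (g_h(φ), ρ·R_h0(φ)) at (φ*,0) is triangular with diagonal entries g_h'(φ*) and R_h0(φ*), the steady state (φ*, 0) is a hyperbolic saddle.) -/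
/-!
With `s = sinh φ*` and `c = cosh φ*`, the equation `tanh φ* = 2a/3` reads `3 s = 2 a c`.
Using it to eliminate `2 a c`, together with `c² - s² = 1`, everything collapses:
`g_h(φ*) = s c (3 s - 2 a c) = 0`, `g_h'(φ*) = 3 s (c² - s²) = 3 s > 0`, and
`R_h0(φ*) = a c - 2 s = -(a/3) c < 0`.
-/

open Real

/-- For `0 < a < 3/2` and `φ* = artanh(2a/3) > 0` (spelled via its
logarithmic formula and characterized by `0 < φ*` and `tanh φ* = 2a/3`), with
`g_h(φ) = 3 sinh²φ cosh φ − 2a cosh²φ sinh φ` and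
`R_h0(φ) = a cosh φ − 2 sinh φ − 3 sinh³φ + 2a cosh φ sinh²φ`, one has
`g_h(φ*) = 0`, `g_h'(φ*) > 0`, `R_h0(φ*) = −(a/3) cosh φ* < 0`, hence
`g_h'(φ*)·R_h0(φ*) < 0`; so the steady state `(φ*, 0)` of the desingularized
hyperbolic blow-up is a hyperbolic saddle. -/
theorem second_hyperbolic_steady_state_saddle (a : ℝ) (ha : 0 < a) (ha' : a < 3 / 2)
    (φstar : ℝ)
    (hφstar : φstar = (1 / 2) * Real.log ((1 + 2 * a / 3) / (1 - 2 * a / 3)))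
    (gh Rh0 : ℝ → ℝ)
    (hgh : ∀ φ : ℝ, gh φ = 3 * sinh φ ^ 2 * cosh φ - 2 * a * cosh φ ^ 2 * sinh φ)
    (hRh0 : ∀ φ : ℝ, Rh0 φ = a * cosh φ - 2 * sinh φ - 3 * sinh φ ^ 3
        + 2 * a * cosh φ * sinh φ ^ 2) :
    0 < φstar ∧
    tanh φstar = 2 * a / 3 ∧
    gh φstar = 0 ∧
    0 < deriv gh φstar ∧
    Rh0 φstar = -(a / 3) * cosh φstar ∧
    Rh0 φstar < 0 ∧
    deriv gh φstar * Rh0 φstar < 0 := by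
  have hφ : φstar = artanh (2 * a / 3) := by
    rw [hφstar, artanh_eq_half_log ⟨by linarith, by linarith⟩]
  have hpos : 0 < φstar := hφ ▸ artanh_pos ⟨by linarith, by linarith⟩
  have htanh : tanh φstar = 2 * a / 3 := hφ ▸ tanh_artanh ⟨by linarith, by linarith⟩
  have hc : 0 < cosh φstar := cosh_pos _
  have hs : 0 < sinh φstar := sinh_pos_iff.2 hpos
  have hrel : 3 * sinh φstar = 2 * a * cosh φstar := by
    have h := htanh
    rw [tanh_eq_sinh_div_cosh, div_eq_iff hc.ne'] at h
    linarith
  have hderiv : deriv gh φstar = 3 * sinh φstar := by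
    have h : HasDerivAt gh
        (6 * sinh φstar * cosh φstar ^ 2 + 3 * sinh φstar ^ 3
          - 4 * a * cosh φstar * sinh φstar ^ 2 - 2 * a * cosh φstar ^ 3) φstar := by
      rw [funext hgh]
      have hS := hasDerivAt_sinh φstar
      have hC := hasDerivAt_cosh φstar
      refine HasDerivAt.congr_deriv ((((hS.fun_pow 2).const_mul 3).fun_mul hC).fun_sub
        (((hC.fun_pow 2).const_mul (2 * a)).fun_mul hS)) ?_
      push_cast
      ring
    rw [h.deriv]
    linear_combination (2 * sinh φstar ^ 2 + cosh φstar ^ 2) * hrel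
      + 3 * sinh φstar * cosh_sq_sub_sinh_sq φstar
  have hR : Rh0 φstar = -(a / 3) * cosh φstar := by
    rw [hRh0]
    linear_combination (-sinh φstar ^ 2 - 2 / 3) * hrel
  have hRneg : Rh0 φstar < 0 := by
    rw [hR]
    nlinarith [mul_pos ha hc]
  have hdpos : 0 < deriv gh φstar := by
    rw [hderiv]
    positivity
  refine ⟨hpos, htanh, ?_, hdpos, hR, hRneg, mul_neg_of_pos_of_neg hdpos hRneg⟩
  rw [hgh]
  linear_combination sinh φstar * cosh φstar * hrel
end
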